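/- Let T denote the set of n×n lower triangular real matrices. Let L̄ ∈ T and b̄ ∈ ℝⁿ with ‖L̄‖_max ≤ 1 and ‖b̄‖_∞ ≤ 1, σ > 0, and let L ~ N_T(L̄, σ²Id) and b ~ N(b̄, σ²Id) be independent. Then for every β > 1, E( log_β(c(L,b)) ) ≤ log_β((1 + σ)/σ) + 5·log_β n + 2.65/ln β, where c(L,b) = max_{k ∈ [n]} c_k(L,b) and c_k(L,b) is the componentwise condition number of the map (L,b) ↦ (L⁻¹b)_k at (L,b) (L is almost surely invertible). -/

import Mathlib

open MeasureTheory ProbabilityTheory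
open scoped ENNReal

/-- Componentwise "distance" `d(u,v) = ‖(u−v)/v‖_∞`, valued in `[0,∞]`:
the `i`-th component of the quotient is `|u i − v i|/|v i|` if `v i ≠ 0`,
`0` if `u i = v i = 0`, and `∞` otherwise. -/
noncomputable def cwDist {ι : Type*} (u v : ι → ℝ) : ℝ≥0∞ :=
  ⨆ i, if v i ≠ 0 then ENNReal.ofReal (|u i - v i| / |v i|)
       else if u i = v i then 0 else ⊤

/-- Componentwise condition number of `F : D ⊆ ℝ^ι → ℝ^κ` at `a`:
`c^F(a) = lim_{δ→0} sup { d(F x, F a)/d(x,a) : x ∈ D, d(x,a) ≤ δ, x ≠ a }`,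
the limit being an infimum since the sup is monotone in `δ`. -/
noncomputable def cwCond {ι κ : Type*} (D : Set (ι → ℝ)) (F : (ι → ℝ) → κ → ℝ)
    (a : ι → ℝ) : ℝ≥0∞ :=
  ⨅ δ ∈ Set.Ioi (0 : ℝ≥0∞),
    ⨆ x ∈ {x ∈ D | cwDist x a ≤ δ ∧ x ≠ a}, cwDist (F x) (F a) / cwDist x a

/-- A matrix viewed as a point of `ℝ^(n×n)`. -/
def matToFun {n : ℕ} (A : Matrix (Fin n) (Fin n) ℝ) : Fin n × Fin n → ℝ :=
  fun p => A p.1 p.2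

/-- A point of `ℝ^(n×n)` viewed as a matrix. -/
def funToMat {n : ℕ} (x : Fin n × Fin n → ℝ) : Matrix (Fin n) (Fin n) ℝ :=
  Matrix.of fun i j => x (i, j)

/-- The componentwise condition number `c^det(A)` of determinant computation at `A`. -/
noncomputable def cDet {n : ℕ} (A : Matrix (Fin n) (Fin n) ℝ) : ℝ≥0∞ :=
  cwCond Set.univ (fun x (_ : Unit) => (funToMat x).det) (matToFun A)

/-- The componentwise condition number `c†_{kl}(A)` of the map `A ↦ (A⁻¹)_{kl}` at `A`. -/
noncomputable def cInv {n : ℕ} (k l : Fin n) (A : Matrix (Fin n) (Fin n) ℝ) : ℝ≥0∞ :=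
  cwCond {x | IsUnit (funToMat x).det}
    (fun x (_ : Unit) => (funToMat x)⁻¹ k l) (matToFun A)

/-- `c†(A) = max_{k,l} c†_{kl}(A)`. -/
noncomputable def cInvMax {n : ℕ} (A : Matrix (Fin n) (Fin n) ℝ) : ℝ≥0∞ :=
  ⨆ k, ⨆ l, cInv k l A

/-- A pair (matrix, right-hand side) viewed as a point of `ℝ^(n×n+n)`. -/
def pairToFun {n : ℕ} (A : Matrix (Fin n) (Fin n) ℝ) (b : Fin n → ℝ) :
    (Fin n × Fin n) ⊕ Fin n → ℝ :=
  Sum.elim (fun p => A p.1 p.2) b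

def funToMat' {n : ℕ} (x : (Fin n × Fin n) ⊕ Fin n → ℝ) : Matrix (Fin n) (Fin n) ℝ :=
  Matrix.of fun i j => x (Sum.inl (i, j))

def funToVec {n : ℕ} (x : (Fin n × Fin n) ⊕ Fin n → ℝ) : Fin n → ℝ :=
  fun i => x (Sum.inr i)

/-- The componentwise condition number `c_k(A,b)` of the map `(A,b) ↦ (A⁻¹b)_k` at `(A,b)`. -/
noncomputable def cLin {n : ℕ} (k : Fin n) (A : Matrix (Fin n) (Fin n) ℝ)
    (b : Fin n → ℝ) : ℝ≥0∞ :=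
  cwCond {x | IsUnit (funToMat' x).det}
    (fun x (_ : Unit) => (Matrix.mulVec (funToMat' x)⁻¹ (funToVec x)) k) (pairToFun A b)

/-- `c(A,b) = max_k c_k(A,b)`. -/
noncomputable def cLinMax {n : ℕ} (A : Matrix (Fin n) (Fin n) ℝ) (b : Fin n → ℝ) : ℝ≥0∞ :=
  ⨆ k, cLin k A b

instance matrixMeasurableSpace {n : ℕ} : MeasurableSpace (Matrix (Fin n) (Fin n) ℝ) :=
  inferInstanceAs (MeasurableSpace (Fin n → Fin n → ℝ))

/-- The distribution `N_S(Ā, σ²Id)` of a random sparse matrix: the entries `a_{ij}` with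
`(i,j) ∈ S` are independent Gaussians `N(ā_{ij}, σ²)`, and `a_{ij} = 0` for `(i,j) ∉ S`. -/
noncomputable def sparseGaussian {n : ℕ} (S : Finset (Fin n × Fin n))
    (Abar : Matrix (Fin n) (Fin n) ℝ) (σ : ℝ) : Measure (Matrix (Fin n) (Fin n) ℝ) :=
  (Measure.pi fun p : S => gaussianReal (Abar p.1.1 p.1.2) ⟨σ ^ 2, sq_nonneg σ⟩).map
    fun g => Matrix.of fun i j => if h : (i, j) ∈ S then g ⟨(i, j), h⟩ else 0

/-- The distribution `N(b̄, σ²Id)` on `ℝⁿ`: independent Gaussian entries `N(b̄_i, σ²)`. -/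
noncomputable def vecGaussian {n : ℕ} (bbar : Fin n → ℝ) (σ : ℝ) : Measure (Fin n → ℝ) :=
  Measure.pi fun i => gaussianReal (bbar i) ⟨σ ^ 2, sq_nonneg σ⟩

/-- `S ⊆ [n]²` is admissible when `M_S` contains an invertible matrix. -/
def Admissible {n : ℕ} (S : Finset (Fin n × Fin n)) : Prop :=
  ∃ B : Matrix (Fin n) (Fin n) ℝ, (∀ i j, (i, j) ∉ S → B i j = 0) ∧ IsUnit B.det

/-- The lower-triangular sparsity pattern `{(i,j) ∈ [n]² : i ≥ j}`. -/
def triPattern (n : ℕ) : Finset (Fin n × Fin n) :=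
  Finset.univ.filter fun p => p.2 ≤ p.1

/-!
Write `x = L⁻¹b`. Differentiating `(L, b) ↦ xₖ` gives Skeel's formula
`cₖ(L, b) = (∑ᵢ |L⁻¹ₖᵢ| (∑ⱼ |Lᵢⱼ| |xⱼ| + |bᵢ|)) / |xₖ|`. The `i`-th equation bounds the diagonal
term `|Lᵢᵢ xᵢ|` by `|bᵢ| + ∑_{j<i} |Lᵢⱼ xⱼ|`, so `cₖ` is at most twice the sum of the at most `n²`
ratios `|L⁻¹ₖᵢ Lᵢⱼ xⱼ| / |xₖ|` (`j < i`) and `|L⁻¹ₖᵢ bᵢ| / |xₖ|`.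

As a function of the one Gaussian variable `g = Lᵢⱼ` or `g = bᵢ`, with all other entries fixed,
each ratio has the form `|γg| / |α - γg|`: since `L` is triangular, `xⱼ` and `L⁻¹ₖᵢ` do not depend
on `Lᵢⱼ`. Where the ratio is at least `t ≥ 2`, `g` lies in an interval of width `O(|α/γ| / t)` whose
points have absolute value of order `|α/γ|`; as the density `f` of `g` satisfies
`f(g) |g| ≤ (1 + σ)/(2σ)`, this event has probability at most `2((1 + σ)/σ)/t`, whatever `α` and `γ`
are. A union bound over `n³` ratios yields `P(c(L, b) > t) ≤ 4n⁵((1 + σ)/σ)/t`, and integrating this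
tail on the logarithmic scale gives `E(ln c(L, b)) ≤ ln(4n⁵(1 + σ)/σ) + 1`.
-/

open Filter Topology
open scoped Matrix NNReal

section SliceBounds

variable {α β : Type*} [MeasurableSpace α] [MeasurableSpace β]

lemma pi_apply_le_of_forall_update {ι : Type*} [Fintype ι] [DecidableEq ι] {X : ι → Type*}
    [∀ i, MeasurableSpace (X i)] (μ : ∀ i, Measure (X i)) [∀ i, IsProbabilityMeasure (μ i)]
    {s : Set (∀ i, X i)} (hs : MeasurableSet s) (i : ι) {c : ℝ≥0∞}
    (h : ∀ x, μ i {t | Function.update x i t ∈ s} ≤ c) : Measure.pi μ s ≤ c := by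
  have : ∀ i, Nonempty (X i) := fun i => nonempty_of_isProbabilityMeasure (μ i)
  have slice_le : (fun x => ∫⁻ t, s.indicator 1 (Function.update x i t) ∂μ i) ≤ fun _ => c := by
    intro x
    refine le_trans (le_of_eq ?_) (h x)
    exact lintegral_indicator_one (measurable_update x hs)
  rw [← lintegral_indicator_one hs,
    lintegral_eq_lmarginal_univ (fun i => Classical.arbitrary (X i)),
    lmarginal_erase' _ (measurable_one.indicator hs) (Finset.mem_univ i)]
  refine (lmarginal_mono slice_le _).trans ?_
  simp [lmarginal]

lemma prod_apply_le_of_forall_left (μ : Measure α) (ν : Measure β) [IsProbabilityMeasure μ]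
    [SFinite ν] {s : Set (α × β)} (hs : MeasurableSet s) {c : ℝ≥0∞}
    (h : ∀ x, ν (Prod.mk x ⁻¹' s) ≤ c) : μ.prod ν s ≤ c := by
  rw [Measure.prod_apply hs]
  exact (lintegral_mono h).trans (by simp)

lemma prod_apply_le_of_forall_right (μ : Measure α) (ν : Measure β) [SFinite μ]
    [IsProbabilityMeasure ν] {s : Set (α × β)} (hs : MeasurableSet s) {c : ℝ≥0∞}
    (h : ∀ y, μ ((fun x => (x, y)) ⁻¹' s) ≤ c) : μ.prod ν s ≤ c := by
  rw [Measure.prod_apply_symm hs]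
  exact (lintegral_mono h).trans (by simp)

end SliceBounds

section LogTail

variable {Ω : Type*} [MeasurableSpace Ω] {μ : Measure Ω}

lemma lintegral_ofReal_sub_le_one_of_exp_tail {X : Ω → ℝ} (hX : AEMeasurable X μ) {a : ℝ}
    (htail : ∀ u > 0, μ {ω | a + u < X ω} ≤ ENNReal.ofReal (Real.exp (-u))) :
    ∫⁻ ω, ENNReal.ofReal (X ω - a) ∂μ ≤ 1 := by
  have hmax : ∀ ω, ENNReal.ofReal (X ω - a) = ENNReal.ofReal (max (X ω - a) 0) := fun ω => by
    simp
  simp_rw [hmax]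
  rw [lintegral_eq_lintegral_meas_lt μ (f := fun ω => max (X ω - a) 0)
    (Eventually.of_forall fun ω => le_max_right _ _) ((hX.sub_const a).max aemeasurable_const)]
  calc ∫⁻ u in Set.Ioi 0, μ {ω | u < max (X ω - a) 0}
      ≤ ∫⁻ u in Set.Ioi 0, ENNReal.ofReal (Real.exp (-u)) := by
        refine setLIntegral_mono' measurableSet_Ioi fun u (hu : 0 < u) => ?_
        refine (measure_mono fun ω hω => ?_).trans (htail u hu)
        exact lt_sub_iff_add_lt'.1 ((lt_max_iff.1 hω).resolve_right hu.not_gt)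
    _ = 1 := by
        rw [← ofReal_integral_eq_lintegral_ofReal (integrableOn_exp_neg_Ioi 0)
          (Eventually.of_forall fun _ => (Real.exp_pos _).le), integral_exp_neg_Ioi_zero,
          ENNReal.ofReal_one]

lemma lintegral_ofReal_le_add_one_of_exp_tail [IsProbabilityMeasure μ] {X : Ω → ℝ}
    (hX : AEMeasurable X μ) {a : ℝ} (ha : 0 ≤ a)
    (htail : ∀ u > 0, μ {ω | a + u < X ω} ≤ ENNReal.ofReal (Real.exp (-u))) :
    ∫⁻ ω, ENNReal.ofReal (X ω) ∂μ ≤ ENNReal.ofReal (a + 1) :=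
  calc ∫⁻ ω, ENNReal.ofReal (X ω) ∂μ
      ≤ ∫⁻ ω, (ENNReal.ofReal a + ENNReal.ofReal (X ω - a)) ∂μ :=
        lintegral_mono fun ω => by
          simpa only [add_sub_cancel] using ENNReal.ofReal_add_le (p := a) (q := X ω - a)
    _ = ENNReal.ofReal a + ∫⁻ ω, ENNReal.ofReal (X ω - a) ∂μ := by
        rw [lintegral_add_left measurable_const]; simp
    _ ≤ ENNReal.ofReal a + 1 := by
        gcongr; exact lintegral_ofReal_sub_le_one_of_exp_tail hX htail
    _ = ENNReal.ofReal (a + 1) := by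
        rw [ENNReal.ofReal_add ha zero_le_one, ENNReal.ofReal_one]

theorem integrable_log_and_integral_log_le_of_tail [IsProbabilityMeasure μ] {Y : Ω → ℝ≥0∞}
    (hY : AEMeasurable Y μ) (hY1 : ∀ᵐ ω ∂μ, 1 ≤ Y ω) {K : ℝ} (hK : 1 ≤ K)
    (htail : ∀ t > 0, μ {ω | ENNReal.ofReal t < Y ω} ≤ ENNReal.ofReal (K / t)) :
    Integrable (fun ω => Real.log (Y ω).toReal) μ ∧
      ∫ ω, Real.log (Y ω).toReal ∂μ ≤ Real.log K + 1 := by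
  have hlog : AEMeasurable (fun ω => Real.log (Y ω).toReal) μ :=
    Real.measurable_log.comp_aemeasurable hY.ennreal_toReal
  have hlogK : 0 ≤ Real.log K := Real.log_nonneg hK
  have hnonneg : 0 ≤ᵐ[μ] fun ω => Real.log (Y ω).toReal := by
    filter_upwards [hY1] with ω hω
    by_cases htop : Y ω = ⊤
    · simp [htop]
    · exact Real.log_nonneg (by simpa using ENNReal.toReal_mono htop hω)
  have hexp_tail : ∀ u > 0, μ {ω | Real.log K + u < Real.log (Y ω).toReal}
      ≤ ENNReal.ofReal (Real.exp (-u)) := by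
    intro u hu
    have hquot : K / (K * Real.exp u) = Real.exp (-u) := by
      rw [Real.exp_neg, div_mul_cancel_left₀ (by positivity)]
    rw [← hquot]
    refine (measure_mono fun ω hω => ?_).trans (htail _ (by positivity))
    contrapose! hω
    simp only [Set.mem_ofPred_eq, not_lt] at hω ⊢
    have hle := ENNReal.toReal_le_of_le_ofReal (by positivity) hω
    rcases ENNReal.toReal_nonneg.eq_or_lt with h0 | hpos
    · rw [← h0, Real.log_zero]; positivity
    · calc Real.log (Y ω).toReal ≤ Real.log (K * Real.exp u) := Real.log_le_log hpos hle
        _ = Real.log K + u := by rw [Real.log_mul (by positivity) (by positivity), Real.log_exp]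
  have hbound := lintegral_ofReal_le_add_one_of_exp_tail hlog hlogK hexp_tail
  refine ⟨⟨hlog.aestronglyMeasurable, ?_⟩, ?_⟩
  · rw [hasFiniteIntegral_iff_ofReal hnonneg]
    exact hbound.trans_lt ENNReal.ofReal_lt_top
  · rw [integral_eq_lintegral_of_nonneg_ae hnonneg hlog.aestronglyMeasurable]
    exact ENNReal.toReal_le_of_le_ofReal (by positivity) hbound

end LogTail

section Ratio

lemma abs_sub_le_of_mul_abs_sub_le {t l h : ℝ} (ht : 1 < t) (hl : t * |l - h| ≤ |l|) :
    |l - h * (t ^ 2 / (t ^ 2 - 1))| ≤ |h| * (t / (t ^ 2 - 1)) := by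
  have hpos : 0 < t ^ 2 - 1 := by nlinarith
  refine abs_le_of_sq_le_sq ?_ (by positivity)
  have hsq : t ^ 2 * (l - h) ^ 2 ≤ l ^ 2 := by
    rw [← sq_abs (l - h), ← sq_abs l, ← mul_pow]
    gcongr
  have hident : (|h| * (t / (t ^ 2 - 1))) ^ 2 - (l - h * (t ^ 2 / (t ^ 2 - 1))) ^ 2
      = (l ^ 2 - t ^ 2 * (l - h) ^ 2) / (t ^ 2 - 1) := by
    rw [mul_pow, sq_abs]
    field_simp
    ring
  have := div_nonneg (sub_nonneg.2 hsq) hpos.le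
  linarith

lemma mul_div_add_one_le_abs_of_mul_abs_sub_le {t l h : ℝ} (ht : 0 < t) (hl : t * |l - h| ≤ |l|) :
    |h| * (t / (t + 1)) ≤ |l| := by
  rw [mul_div_assoc', div_le_iff₀ (by linarith)]
  have htri : |h| - |l| ≤ |l - h| := abs_sub_comm l h ▸ abs_sub_abs_le_abs_sub h l
  linarith [mul_le_mul_of_nonneg_right htri ht.le]

lemma withDensity_setOf_le_abs_div_abs_sub_le {f : ℝ → ℝ} {M : ℝ} (hf : ∀ x, f x * |x| ≤ M)
    {t : ℝ} (ht : 1 < t) (h : ℝ) :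
    volume.withDensity (fun x => ENNReal.ofReal (f x)) {x | t ≤ |x| / |x - h|}
      ≤ ENNReal.ofReal (2 * M / (t - 1)) := by
  set s : Set ℝ := {x | t ≤ |x| / |x - h|} with hs_def
  have hs : ∀ x ∈ s, t * |x - h| ≤ |x| := fun x hx => by
    have hx : t ≤ |x| / |x - h| := hx
    rcases (abs_nonneg (x - h)).eq_or_lt with h0 | hpos
    · rw [← h0, mul_zero]; positivity
    · rwa [le_div_iff₀ hpos] at hx
  rcases eq_or_ne h 0 with rfl | hh
  · have hempty : s = ∅ := Set.eq_empty_of_forall_notMem fun x (hx : t ≤ |x| / |x - 0|) => by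
      rw [sub_zero] at hx
      exact (hx.trans (div_self_le_one _)).not_gt ht
    simp [hempty]
  have : 0 < |h| := abs_pos.2 hh
  set q : ℝ := |h| * (t / (t + 1)) with hq_def
  set δ : ℝ := |h| * (t / (t ^ 2 - 1)) with hδ_def
  have hq : 0 < q := by positivity
  have hM : 0 ≤ M := by simpa using hf 0
  have hdens : ∀ x ∈ s, ENNReal.ofReal (f x) ≤ ENNReal.ofReal (M / q) := fun x hx => by
    have hqx : q ≤ |x| := mul_div_add_one_le_abs_of_mul_abs_sub_le (by linarith) (hs x hx)
    refine ENNReal.ofReal_le_ofReal (((le_div_iff₀ (hq.trans_le hqx)).2 (hf x)).trans ?_)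
    gcongr
  have hvol : volume s ≤ ENNReal.ofReal (2 * δ) := by
    refine (measure_mono fun x hx => ?_).trans_eq
      (Real.volume_closedBall (a := h * (t ^ 2 / (t ^ 2 - 1))) (r := δ))
    exact abs_sub_le_of_mul_abs_sub_le ht (hs x hx)
  calc volume.withDensity (fun x => ENNReal.ofReal (f x)) s
      = ∫⁻ x in s, ENNReal.ofReal (f x) := withDensity_apply' _ s
    _ ≤ ∫⁻ _ in s, ENNReal.ofReal (M / q) := by
        refine setLIntegral_mono' ?_ hdens
        exact measurableSet_le (by fun_prop) (by fun_prop)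
    _ = ENNReal.ofReal (M / q) * volume s := setLIntegral_const _ _
    _ ≤ ENNReal.ofReal (M / q) * ENNReal.ofReal (2 * δ) := by gcongr
    _ = ENNReal.ofReal (2 * M / (t - 1)) := by
        rw [← ENNReal.ofReal_mul (by positivity), hq_def, hδ_def]
        have hfactor : t ^ 2 - 1 = (t - 1) * (t + 1) := by ring
        have : t - 1 ≠ 0 := by linarith
        rw [hfactor]
        congr 1
        field_simp

end Ratio

section Gaussian

variable {v : ℝ≥0}

lemma gaussianPDFReal_mul_abs_le (m : ℝ) (hv : v ≠ 0) (x : ℝ) :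
    gaussianPDFReal m v x * |x| ≤ (|m| + √v) / (2 * √v) := by
  set σ : ℝ := √v
  have hσ : 0 < σ := Real.sqrt_pos.2 (by exact_mod_cast pos_iff_ne_zero.2 hv)
  have hvσ : (v : ℝ) = σ ^ 2 := (Real.sq_sqrt v.coe_nonneg).symm
  set z : ℝ := |x - m| / σ with hz_def
  have hx : |x| ≤ |m| + σ * z := by
    have := abs_sub_abs_le_abs_sub x m
    rw [hz_def, mul_div_cancel₀ _ hσ.ne']
    linarith
  have hgrowth : |m| + σ * z ≤ (|m| + σ) * Real.exp (z ^ 2 / 2) := by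
    have hexp := Real.add_one_le_exp (z ^ 2 / 2)
    have hz_le : z ≤ Real.exp (z ^ 2 / 2) := by linarith [sq_nonneg (z - 1)]
    have hone_le : 1 ≤ Real.exp (z ^ 2 / 2) := Real.one_le_exp (by positivity)
    nlinarith only [abs_nonneg m, hσ, hz_le, hone_le]
  have hnorm : 2 * σ ≤ √(2 * Real.pi * v) := by
    refine Real.le_sqrt_of_sq_le ?_
    rw [hvσ]
    nlinarith [Real.pi_gt_three, sq_nonneg σ]
  have hpdf : gaussianPDFReal m v x = (√(2 * Real.pi * v) * Real.exp (z ^ 2 / 2))⁻¹ := by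
    rw [gaussianPDFReal, mul_inv, ← Real.exp_neg, hz_def, div_pow, sq_abs, hvσ]
    congr 2
    field_simp
  rw [hpdf, inv_mul_le_iff₀ (by positivity)]
  calc |x| ≤ (|m| + σ) * Real.exp (z ^ 2 / 2) := hx.trans hgrowth
    _ = 2 * σ * Real.exp (z ^ 2 / 2) * ((|m| + σ) / (2 * σ)) := by field_simp
    _ ≤ √(2 * Real.pi * v) * Real.exp (z ^ 2 / 2) * ((|m| + σ) / (2 * σ)) := by gcongr

lemma gaussianReal_setOf_le_abs_div_abs_sub_le (m : ℝ) (hv : v ≠ 0) {t : ℝ} (ht : 0 < t) (h : ℝ) :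
    gaussianReal m v {x | t ≤ |x| / |x - h|} ≤ ENNReal.ofReal (2 * ((|m| + √v) / √v) / t) := by
  have hσ : 0 < √(v : ℝ) := Real.sqrt_pos.2 (by exact_mod_cast pos_iff_ne_zero.2 hv)
  have hone_le : 1 ≤ (|m| + √v) / √v := by
    rw [le_div_iff₀ hσ, one_mul]
    exact le_add_of_nonneg_left (abs_nonneg m)
  rcases lt_or_ge t 2 with ht2 | ht2
  · refine prob_le_one.trans ?_
    rw [ENNReal.one_le_ofReal, le_div_iff₀ ht]
    linarith
  rw [gaussianReal_of_var_ne_zero _ hv]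
  refine (withDensity_setOf_le_abs_div_abs_sub_le (gaussianPDFReal_mul_abs_le m hv)
    (by linarith) h).trans (ENNReal.ofReal_le_ofReal ?_)
  calc 2 * ((|m| + √v) / (2 * √v)) / (t - 1) = (|m| + √v) / √v * (1 / (t - 1)) := by field_simp
    _ ≤ (|m| + √v) / √v * (2 / t) := by
        gcongr ?_ * ?_
        rw [div_le_div_iff₀ (by linarith) ht]
        linarith
    _ = 2 * ((|m| + √v) / √v) / t := by ring

lemma gaussianReal_setOf_le_abs_mul_div_abs_sub_mul_le (m : ℝ) (hv : v ≠ 0) {t : ℝ} (ht : 0 < t)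
    (α γ : ℝ) :
    gaussianReal m v {x | t ≤ |γ * x| / |α - γ * x|}
      ≤ ENNReal.ofReal (2 * ((|m| + √v) / √v) / t) := by
  rcases eq_or_ne γ 0 with rfl | hγ
  · simp [ht.not_ge]
  · have hscale : ∀ x, |γ * x| / |α - γ * x| = |x| / |x - α / γ| := fun x => by
      rw [abs_sub_comm, show γ * x - α = γ * (x - α / γ) by field_simp, abs_mul, abs_mul,
        mul_div_mul_left _ _ (abs_ne_zero.2 hγ)]
    simp_rw [hscale]
    exact gaussianReal_setOf_le_abs_div_abs_sub_le m hv ht (α / γ)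

end Gaussian

section ConditionNumber

variable {ι : Type*}

lemma abs_sub_le_cwDist_toReal_mul {u v : ι → ℝ} (h : cwDist u v ≠ ⊤) (i : ι) :
    |u i - v i| ≤ (cwDist u v).toReal * |v i| := by
  have hi := le_iSup (fun i => if v i ≠ 0 then ENNReal.ofReal (|u i - v i| / |v i|)
    else if u i = v i then 0 else ⊤) i
  change _ ≤ cwDist u v at hi
  by_cases hv : v i = 0
  · by_cases hu : u i = v i
    · simp [hu, hv]
    · rw [if_neg (not_not.2 hv), if_neg hu] at hi
      exact absurd (top_le_iff.1 hi) h
  · rw [if_pos hv, ENNReal.ofReal_le_iff_le_toReal h] at hi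
    rwa [div_le_iff₀ (abs_pos.2 hv)] at hi

lemma cwDist_le_ofReal {u v : ι → ℝ} {ε : ℝ} (h : ∀ i, |u i - v i| ≤ ε * |v i|) :
    cwDist u v ≤ ENNReal.ofReal ε := by
  refine iSup_le fun i => ?_
  by_cases hv : v i = 0
  · have hu : u i = v i := by simpa [hv] using h i
    simp [hv, hu]
  · rw [if_pos hv]
    exact ENNReal.ofReal_le_ofReal ((div_le_iff₀ (abs_pos.2 hv)).2 (h i))

lemma cwDist_const_unit {r s : ℝ} (hs : s ≠ 0) :
    cwDist (fun _ : Unit => r) (fun _ => s) = ENNReal.ofReal (|r - s| / |s|) := by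
  simp [cwDist, hs]

variable [Fintype ι] [DecidableEq ι]

/-- `∑ᵢ |∂ᵢF(a)| |aᵢ|` for a linear functional `F' = DF(a)`: dividing it by `|F a|` gives the
componentwise condition number of a scalar function `F` differentiable at `a`. -/
noncomputable def cwGradSum (F' : (ι → ℝ) →L[ℝ] ℝ) (a : ι → ℝ) : ℝ :=
  ∑ i, |F' (Pi.single i 1)| * |a i|

lemma cwGradSum_nonneg (F' : (ι → ℝ) →L[ℝ] ℝ) (a : ι → ℝ) : 0 ≤ cwGradSum F' a := by
  unfold cwGradSum; positivity

lemma map_eq_sum_mul_single (F' : (ι → ℝ) →L[ℝ] ℝ) (h : ι → ℝ) :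
    F' h = ∑ i, h i * F' (Pi.single i 1) := by
  conv_lhs => rw [pi_eq_sum_univ' h]
  simp

lemma abs_map_le_mul_cwGradSum {F' : (ι → ℝ) →L[ℝ] ℝ} {a h : ι → ℝ} {d : ℝ}
    (hd : ∀ i, |h i| ≤ d * |a i|) : |F' h| ≤ d * cwGradSum F' a := by
  rw [map_eq_sum_mul_single, cwGradSum, Finset.mul_sum]
  refine (Finset.abs_sum_le_sum_abs _ _).trans (Finset.sum_le_sum fun i _ => ?_)
  calc |h i * F' (Pi.single i 1)| = |h i| * |F' (Pi.single i 1)| := abs_mul _ _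
    _ ≤ d * |a i| * |F' (Pi.single i 1)| := by gcongr; exact hd i
    _ = d * (|F' (Pi.single i 1)| * |a i|) := by ring

lemma exists_map_eq_cwGradSum (F' : (ι → ℝ) →L[ℝ] ℝ) (a : ι → ℝ) :
    ∃ h : ι → ℝ, (∀ i, |h i| ≤ |a i|) ∧ F' h = cwGradSum F' a := by
  refine ⟨fun i => SignType.sign (F' (Pi.single i 1)) * |a i|, fun i => ?_, ?_⟩
  · rw [abs_mul, abs_abs]
    refine mul_le_of_le_one_left (abs_nonneg _) ?_
    rcases SignType.trichotomy (SignType.sign (F' (Pi.single i 1))) with h | h | h <;> simp [h]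
  · rw [map_eq_sum_mul_single, cwGradSum]
    refine Finset.sum_congr rfl fun i _ => ?_
    rw [← sign_mul_self (F' (Pi.single i 1))]
    ring

variable {D : Set (ι → ℝ)} {F : (ι → ℝ) → ℝ} {F' : (ι → ℝ) →L[ℝ] ℝ} {a : ι → ℝ}

lemma cwCond_le_of_hasFDerivAt (hF : HasFDerivAt F F' a) (ha : F a ≠ 0) :
    cwCond D (fun x (_ : Unit) => F x) a ≤ ENNReal.ofReal (cwGradSum F' a / |F a|) := by
  have hFa : 0 < |F a| := abs_pos.2 ha
  refine ENNReal.le_of_forall_pos_le_add fun η hη _ => ?_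
  set κ : ℝ := η * |F a| / (‖a‖ + 1) with hκ_def
  have hκ : 0 < κ := by positivity
  obtain ⟨ρ, hρ, hball⟩ := Metric.eventually_nhds_iff.1
    (hasFDerivAt_iff_isLittleO.1 hF |>.def hκ)
  refine iInf₂_le_of_le (ENNReal.ofReal (ρ / (‖a‖ + 1) / 2))
    (ENNReal.ofReal_pos.2 (by positivity)) (iSup₂_le fun x ⟨_, hxa, _⟩ => ?_)
  have hfin : cwDist x a ≠ ⊤ := ne_top_of_le_ne_top ENNReal.ofReal_ne_top hxa
  set d := (cwDist x a).toReal
  have hd : ∀ i, |(x - a) i| ≤ d * |a i| := abs_sub_le_cwDist_toReal_mul hfin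
  have hnorm : ‖x - a‖ ≤ d * ‖a‖ :=
    (pi_norm_le_iff_of_nonneg (by positivity)).2 fun i =>
      (hd i).trans (by gcongr; exact norm_le_pi_norm a i)
  have hdist : dist x a < ρ := by
    have hdρ : d ≤ ρ / (‖a‖ + 1) / 2 := ENNReal.toReal_le_of_le_ofReal (by positivity) hxa
    calc dist x a = ‖x - a‖ := dist_eq_norm x a
      _ ≤ ρ / (‖a‖ + 1) / 2 * (‖a‖ + 1) := hnorm.trans (by gcongr; linarith)
      _ = ρ / 2 := by field_simp
      _ < ρ := half_lt_self hρ
  have hdiff : |F x - F a| / |F a| ≤ (cwGradSum F' a / |F a| + η) * d := by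
    rw [div_le_iff₀ hFa]
    calc |F x - F a| ≤ |F' (x - a)| + |F x - F a - F' (x - a)| := by
          simpa using abs_add_le (F' (x - a)) (F x - F a - F' (x - a))
      _ ≤ d * cwGradSum F' a + κ * (d * (‖a‖ + 1)) := by
          refine add_le_add (abs_map_le_mul_cwGradSum hd) ((hball hdist).trans ?_)
          gcongr
          exact hnorm.trans (by gcongr; linarith)
      _ = (cwGradSum F' a / |F a| + η) * d * |F a| := by rw [hκ_def]; field_simp
  refine ENNReal.div_le_of_le_mul ?_
  rw [cwDist_const_unit ha, ← ENNReal.ofReal_toReal hfin, ← ENNReal.ofReal_coe_nnreal,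
    ← ENNReal.ofReal_add (div_nonneg (cwGradSum_nonneg _ _) hFa.le) η.coe_nonneg,
    ← ENNReal.ofReal_mul (add_nonneg (div_nonneg (cwGradSum_nonneg _ _) hFa.le) η.coe_nonneg)]
  exact ENNReal.ofReal_le_ofReal hdiff

lemma le_cwCond_of_hasFDerivAt (hF : HasFDerivAt F F' a) (ha : F a ≠ 0) (hD : D ∈ 𝓝 a) :
    ENNReal.ofReal (cwGradSum F' a / |F a|) ≤ cwCond D (fun x (_ : Unit) => F x) a := by
  obtain ⟨h, hha, hh⟩ := exists_map_eq_cwGradSum F' a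
  refine le_iInf₂ fun δ (hδ : 0 < δ) => le_of_forall_lt fun c hc => ?_
  have hc_real : c.toReal < cwGradSum F' a / |F a| :=
    (ENNReal.lt_ofReal_iff_toReal_lt hc.ne_top).1 hc
  have hline : Tendsto (fun ε : ℝ => a + ε • h) (𝓝[>] 0) (𝓝 a) := by
    have : Continuous fun ε : ℝ => a + ε • h := by fun_prop
    simpa using (this.tendsto 0).mono_left nhdsWithin_le_nhds
  have hslope : Tendsto (fun ε : ℝ => |F (a + ε • h) - F a| / |F a| / ε) (𝓝[>] 0)
      (𝓝 (cwGradSum F' a / |F a|)) := by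
    have hlim := (hF.hasLineDerivAt h).tendsto_slope_zero_right.abs.div_const |F a|
    rw [hh, abs_of_nonneg (cwGradSum_nonneg _ _)] at hlim
    refine hlim.congr' ?_
    filter_upwards [self_mem_nhdsWithin] with ε (hε : 0 < ε)
    simp only [smul_eq_mul, abs_mul, abs_inv, abs_of_pos hε]
    field_simp
  have hsmall : ∀ᶠ ε : ℝ in 𝓝[>] 0, ENNReal.ofReal ε < δ := by
    have : Tendsto ENNReal.ofReal (𝓝[>] 0) (𝓝 0) := by
      simpa using (ENNReal.continuous_ofReal.tendsto 0).mono_left nhdsWithin_le_nhds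
    exact this.eventually_lt_const hδ
  obtain ⟨ε, hDε, hcε, hεδ, hε : 0 < ε⟩ := ((hline.eventually hD).and
    ((hslope.eventually_const_lt hc_real).and (hsmall.and self_mem_nhdsWithin))).exists
  have hdist : cwDist (a + ε • h) a ≤ ENNReal.ofReal ε := cwDist_le_ofReal fun i => by
    simpa [abs_mul, abs_of_pos hε] using mul_le_mul_of_nonneg_left (hha i) hε.le
  have hne : a + ε • h ≠ a := fun heq => by
    rw [heq] at hcε
    simp only [sub_self, abs_zero, zero_div] at hcε
    exact hcε.not_ge ENNReal.toReal_nonneg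
  refine lt_of_lt_of_le ?_ (le_iSup₂_of_le (a + ε • h) ⟨hDε, hdist.trans hεδ.le, hne⟩
    (ENNReal.div_le_div_left hdist _))
  rw [cwDist_const_unit ha, ← ENNReal.ofReal_div_of_pos hε]
  exact (ENNReal.lt_ofReal_iff_toReal_lt hc.ne_top).2 hcε

theorem cwCond_eq_of_hasFDerivAt (hF : HasFDerivAt F F' a) (ha : F a ≠ 0) (hD : D ∈ 𝓝 a) :
    cwCond D (fun x (_ : Unit) => F x) a = ENNReal.ofReal (cwGradSum F' a / |F a|) :=
  (cwCond_le_of_hasFDerivAt hF ha).antisymm (le_cwCond_of_hasFDerivAt hF ha hD)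

end ConditionNumber

section LinearSystem

variable {n : ℕ} {A : Matrix (Fin n) (Fin n) ℝ} {b : Fin n → ℝ} {k : Fin n}

lemma continuous_funToMat' : Continuous (funToMat' (n := n)) :=
  continuous_matrix fun _ _ => continuous_apply _

lemma continuous_funToVec : Continuous (funToVec (n := n)) :=
  continuous_pi fun _ => continuous_apply _

lemma continuousAt_inv_mulVec_pairToFun (hA : IsUnit A.det) :
    ContinuousAt (fun x => (funToMat' x)⁻¹ *ᵥ funToVec x) (pairToFun A b) := by
  have hinv : ContinuousAt (fun x => (funToMat' x)⁻¹) (pairToFun A b) :=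
    ContinuousAt.comp (g := Inv.inv) (f := funToMat')
      (continuousAt_matrix_inv _ (by
        rw [Ring.inverse_eq_inv']
        exact continuousAt_inv₀ hA.ne_zero))
      continuous_funToMat'.continuousAt
  have hmul : Continuous fun p : Matrix (Fin n) (Fin n) ℝ × (Fin n → ℝ) => p.1 *ᵥ p.2 :=
    continuous_fst.matrix_mulVec continuous_snd
  exact hmul.continuousAt.comp (hinv.prodMk continuous_funToVec.continuousAt)

/-- The derivative `(dA, db) ↦ (A⁻¹ (db - dA x))_k`, `x = A⁻¹b`, of `(A, b) ↦ (A⁻¹b)_k`. -/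
noncomputable def linSolveDeriv (A : Matrix (Fin n) (Fin n) ℝ) (b : Fin n → ℝ) (k : Fin n) :
    ((Fin n × Fin n) ⊕ Fin n → ℝ) →L[ℝ] ℝ :=
  ∑ i, A⁻¹ k i • (ContinuousLinearMap.proj (Sum.inr i)
    - ∑ j, (A⁻¹ *ᵥ b) j • ContinuousLinearMap.proj (Sum.inl (i, j)))

lemma linSolveDeriv_apply (h : (Fin n × Fin n) ⊕ Fin n → ℝ) :
    linSolveDeriv A b k h = (A⁻¹ *ᵥ (funToVec h - funToMat' h *ᵥ (A⁻¹ *ᵥ b))) k := by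
  simp only [linSolveDeriv, sum_apply, smul_apply, sub_apply, ContinuousLinearMap.proj_apply,
    smul_eq_mul]
  exact Finset.sum_congr rfl fun i _ => congrArg (fun s => A⁻¹ k i * (h (.inr i) - s))
    (Finset.sum_congr rfl fun j _ => mul_comm _ _)

lemma inv_mulVec_sub_inv_mulVec_eq {A' : Matrix (Fin n) (Fin n) ℝ} (hA : IsUnit A.det)
    (hA' : IsUnit A'.det) (b b' : Fin n → ℝ) :
    A'⁻¹ *ᵥ b' - A⁻¹ *ᵥ b = A⁻¹ *ᵥ (b' - b - (A' - A) *ᵥ (A'⁻¹ *ᵥ b')) := by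
  have hy : A' *ᵥ (A'⁻¹ *ᵥ b') = b' := by
    rw [Matrix.mulVec_mulVec, Matrix.mul_nonsing_inv _ hA', Matrix.one_mulVec]
  have hAy : A⁻¹ *ᵥ (A *ᵥ (A'⁻¹ *ᵥ b')) = A'⁻¹ *ᵥ b' := by
    rw [Matrix.mulVec_mulVec, Matrix.nonsing_inv_mul _ hA, Matrix.one_mulVec]
  rw [Matrix.sub_mulVec, hy, sub_sub_sub_comm, sub_self, zero_sub, neg_sub, Matrix.mulVec_sub, hAy]

lemma setOf_isUnit_det_mem_nhds (hA : IsUnit A.det) :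
    {x | IsUnit (funToMat' x).det} ∈ 𝓝 (pairToFun A b) := by
  simp only [isUnit_iff_ne_zero]
  exact continuous_funToMat'.matrix_det.continuousAt.eventually_ne hA.ne_zero

lemma hasFDerivAt_inv_mulVec_apply (hA : IsUnit A.det) :
    HasFDerivAt (fun x => ((funToMat' x)⁻¹ *ᵥ funToVec x) k) (linSolveDeriv A b k)
      (pairToFun A b) := by
  set a := pairToFun A b
  let X := fun x : (Fin n × Fin n) ⊕ Fin n → ℝ => (funToMat' x)⁻¹ *ᵥ funToVec x
  refine .of_isLittleO ?_
  have hrem : (fun x => X x k - X a k - linSolveDeriv A b k (x - a)) =ᶠ[𝓝 a]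
      fun x => -∑ i, ∑ j, A⁻¹ k i * ((x - a) (.inl (i, j)) * (X x - X a) j) := by
    filter_upwards [setOf_isUnit_det_mem_nhds hA] with x hx
    have hX : X x k - X a k = (A⁻¹ *ᵥ (funToVec x - b - (funToMat' x - A) *ᵥ X x)) k :=
      congrFun (inv_mulVec_sub_inv_mulVec_eq hA hx b (funToVec x)) k
    rw [hX, linSolveDeriv_apply, ← Pi.sub_apply, ← Matrix.mulVec_sub]
    have hdiff : funToVec x - b - (funToMat' x - A) *ᵥ X x
        - (funToVec (x - a) - funToMat' (x - a) *ᵥ X a)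
        = -(funToMat' (x - a) *ᵥ (X x - X a)) := by
      rw [show funToVec (x - a) = funToVec x - b from rfl,
        show funToMat' (x - a) = funToMat' x - A from rfl, Matrix.mulVec_sub]
      abel
    change (A⁻¹ *ᵥ (_ - (_ - _ *ᵥ X a))) k = _
    rw [hdiff, Matrix.mulVec_neg, Pi.neg_apply]
    simp only [Matrix.mulVec, dotProduct, Finset.mul_sum]
    rfl
  refine Asymptotics.IsLittleO.congr' ?_ hrem.symm .rfl
  refine (Asymptotics.IsLittleO.fun_sum fun i _ => .fun_sum fun j _ =>
    Asymptotics.IsLittleO.const_mul_left ?_ (A⁻¹ k i)).neg_left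
  have hcoord : (fun x => (x - a) (.inl (i, j))) =O[𝓝 a] fun x => x - a :=
    (Asymptotics.IsBigO.of_norm_le fun x => norm_le_pi_norm (x - a) _).of_norm_right
  have hX : (fun x => (X x - X a) j) =o[𝓝 a] fun _ => (1 : ℝ) := by
    rw [Asymptotics.isLittleO_one_iff]
    have hXa : ContinuousAt (fun x => X x j) a :=
      continuousAt_pi.1 (continuousAt_inv_mulVec_pairToFun hA) j
    simpa only [Pi.sub_apply, sub_self] using hXa.tendsto.sub_const (X a j)
  simpa using (hcoord.norm_right.mul_isLittleO hX).norm_right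

/-- The explicit value `(∑ᵢ |A⁻¹ₖᵢ| (∑ⱼ |Aᵢⱼ| |xⱼ| + |bᵢ|)) / |xₖ|`, `x = A⁻¹b`, of the
componentwise condition number of `(A, b) ↦ (A⁻¹b)ₖ`, going back to Skeel. -/
noncomputable def skeelCond (A : Matrix (Fin n) (Fin n) ℝ) (b : Fin n → ℝ) (k : Fin n) : ℝ :=
  (∑ i, |A⁻¹ k i| * (∑ j, |A i j| * |(A⁻¹ *ᵥ b) j| + |b i|)) / |(A⁻¹ *ᵥ b) k|

lemma linSolveDeriv_single_inr (i : Fin n) :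
    linSolveDeriv A b k (Pi.single (.inr i) 1) = A⁻¹ k i := by
  simp [linSolveDeriv, Pi.single_apply]

lemma linSolveDeriv_single_inl (i j : Fin n) :
    linSolveDeriv A b k (Pi.single (.inl (i, j)) 1) = -(A⁻¹ k i * (A⁻¹ *ᵥ b) j) := by
  simp [linSolveDeriv, Pi.single_apply, ite_and]

lemma cwGradSum_linSolveDeriv :
    cwGradSum (linSolveDeriv A b k) (pairToFun A b)
      = ∑ i, |A⁻¹ k i| * (∑ j, |A i j| * |(A⁻¹ *ᵥ b) j| + |b i|) := by
  simp only [cwGradSum, Fintype.sum_sum_type, Fintype.sum_prod_type, linSolveDeriv_single_inr,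
    linSolveDeriv_single_inl, pairToFun, Sum.elim_inl, Sum.elim_inr, abs_neg, abs_mul, mul_add,
    Finset.mul_sum, ← Finset.sum_add_distrib]
  congr! 3 with i _
  ring

theorem cLin_eq_skeelCond (hA : IsUnit A.det) (hk : (A⁻¹ *ᵥ b) k ≠ 0) :
    cLin k A b = ENNReal.ofReal (skeelCond A b k) := by
  rw [skeelCond, ← cwGradSum_linSolveDeriv]
  exact cwCond_eq_of_hasFDerivAt (hasFDerivAt_inv_mulVec_apply hA) hk
    (setOf_isUnit_det_mem_nhds hA)

lemma one_le_skeelCond (hk : (A⁻¹ *ᵥ b) k ≠ 0) : 1 ≤ skeelCond A b k := by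
  rw [skeelCond, one_le_div (abs_pos.2 hk)]
  calc |(A⁻¹ *ᵥ b) k| = |∑ i, A⁻¹ k i * b i| := rfl
    _ ≤ ∑ i, |A⁻¹ k i * b i| := Finset.abs_sum_le_sum_abs _ _
    _ = ∑ i, |A⁻¹ k i| * |b i| := by simp only [abs_mul]
    _ ≤ ∑ i, |A⁻¹ k i| * (∑ j, |A i j| * |(A⁻¹ *ᵥ b) j| + |b i|) := by
      refine Finset.sum_le_sum fun i _ => mul_le_mul_of_nonneg_left ?_ (abs_nonneg _)
      exact le_add_of_nonneg_left (Finset.sum_nonneg fun j _ => by positivity)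

end LinearSystem

section LowerTriangular

variable {n : ℕ} {A : Matrix (Fin n) (Fin n) ℝ}

lemma inv_isLowerTriangular (hA : A.IsLowerTriangular) : A⁻¹.IsLowerTriangular := by
  by_cases hdet : IsUnit A.det
  · have := A.invertibleOfIsUnitDet hdet
    exact Matrix.blockTriangular_inv_of_blockTriangular hA
  · rw [Matrix.nonsing_inv_apply_not_isUnit _ hdet]
    exact Matrix.blockTriangular_zero

lemma det_add_single_of_isLowerTriangular (hA : A.IsLowerTriangular) {i j : Fin n} (hij : j < i)
    (t : ℝ) : (A + Matrix.single i j t).det = A.det := by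
  have hsingle : (Matrix.single i j t).IsLowerTriangular :=
    Matrix.blockTriangular_single (b := OrderDual.toDual) hij.le t
  rw [Matrix.det_of_isLowerTriangular _ (hA.add hsingle), Matrix.det_of_isLowerTriangular _ hA]
  refine Finset.prod_congr rfl fun l _ => ?_
  rw [Matrix.add_apply, Matrix.single_apply_of_ne, add_zero]
  rintro ⟨rfl, rfl⟩
  exact hij.false

lemma inv_add_single_of_isLowerTriangular (hA : A.IsLowerTriangular) {i j : Fin n} (hij : j < i)
    (t : ℝ) : (A + Matrix.single i j t)⁻¹ = A⁻¹ - A⁻¹ * Matrix.single i j t * A⁻¹ := by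
  by_cases hdet : IsUnit A.det
  · have hnil : Matrix.single i j t * A⁻¹ * Matrix.single i j t = 0 := by
      rw [Matrix.single_mul_mul_single, inv_isLowerTriangular hA hij]
      simp
    refine Matrix.inv_eq_right_inv ?_
    calc (A + Matrix.single i j t) * (A⁻¹ - A⁻¹ * Matrix.single i j t * A⁻¹)
        = A * A⁻¹ - A * A⁻¹ * Matrix.single i j t * A⁻¹ + Matrix.single i j t * A⁻¹
          - Matrix.single i j t * A⁻¹ * Matrix.single i j t * A⁻¹ := by noncomm_ring
      _ = 1 := by simp [hnil, Matrix.mul_nonsing_inv _ hdet]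
  · have hdet' : ¬IsUnit (A + Matrix.single i j t).det := by
      rwa [det_add_single_of_isLowerTriangular hA hij]
    simp [Matrix.nonsing_inv_apply_not_isUnit _ hdet, Matrix.nonsing_inv_apply_not_isUnit _ hdet']

/-- The size, relative to `xₖ` for `x = A⁻¹b`, of a single summand `A⁻¹ₖᵢ Aᵢⱼ xⱼ` (for `j < i`) or
`A⁻¹ₖᵢ bᵢ` (for `j ≥ i`) of the numerator of `skeelCond`. Repeating the latter for all `j ≥ i`
lets the pairs `(i, j)` index all summands. -/
noncomputable def relTerm (A : Matrix (Fin n) (Fin n) ℝ) (b : Fin n → ℝ) (k i j : Fin n) : ℝ :=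
  |A⁻¹ k i * (if j < i then A i j * (A⁻¹ *ᵥ b) j else b i)| / |(A⁻¹ *ᵥ b) k|

lemma sum_abs_mul_le_of_isLowerTriangular (hA : A.IsLowerTriangular) {b x : Fin n → ℝ}
    (hx : A *ᵥ x = b) (i : Fin n) :
    ∑ j, |A i j| * |x j| + |b i| ≤ 2 * ∑ j, |if j < i then A i j * x j else b i| := by
  have hdiag : |A i i * x i| ≤ |b i| + ∑ j ∈ Finset.univ.erase i, |A i j * x j| := by
    have hbi : b i = A i i * x i + ∑ j ∈ Finset.univ.erase i, A i j * x j := by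
      rw [← hx, Finset.add_sum_erase _ (fun j => A i j * x j) (Finset.mem_univ i)]
      rfl
    rw [eq_sub_of_add_eq hbi.symm]
    exact (abs_sub _ _).trans (add_le_add le_rfl (Finset.abs_sum_le_sum_abs _ _))
  have hoff : ∑ j ∈ Finset.univ.erase i, |A i j * x j|
      ≤ ∑ j ∈ Finset.univ.erase i, |if j < i then A i j * x j else b i| := by
    refine Finset.sum_le_sum fun j hj => ?_
    split_ifs with hji
    · rfl
    · have hij : i < j := (not_lt.1 hji).lt_of_ne (Finset.ne_of_mem_erase hj).symm
      simp [hA hij]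
  simp only [← abs_mul]
  rw [← Finset.add_sum_erase _ (fun j => |A i j * x j|) (Finset.mem_univ i),
    ← Finset.add_sum_erase _ (fun j => |if j < i then A i j * x j else b i|) (Finset.mem_univ i),
    if_neg (lt_irrefl i)]
  linarith

lemma skeelCond_le_two_mul_sum_relTerm (hA : A.IsLowerTriangular) (hdet : IsUnit A.det)
    (b : Fin n → ℝ) (k : Fin n) : skeelCond A b k ≤ 2 * ∑ i, ∑ j, relTerm A b k i j := by
  have hx : A *ᵥ (A⁻¹ *ᵥ b) = b := by
    rw [Matrix.mulVec_mulVec, Matrix.mul_nonsing_inv _ hdet, Matrix.one_mulVec]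
  have hsum : 2 * ∑ i, ∑ j, relTerm A b k i j
      = (∑ i, |A⁻¹ k i| * (2 * ∑ j, |if j < i then A i j * (A⁻¹ *ᵥ b) j else b i|))
        / |(A⁻¹ *ᵥ b) k| := by
    simp only [relTerm, abs_mul (A⁻¹ k _), Finset.sum_div, Finset.mul_sum]
    exact Finset.sum_congr rfl fun i _ => Finset.sum_congr rfl fun j _ => by ring
  rw [hsum, skeelCond]
  gcongr with i
  exact sum_abs_mul_le_of_isLowerTriangular hA hx i

lemma cLinMax_le_of_forall_relTerm_le (hA : A.IsLowerTriangular) (hdet : IsUnit A.det)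
    {b : Fin n → ℝ} (hx : ∀ k, (A⁻¹ *ᵥ b) k ≠ 0) {τ : ℝ}
    (hτ : ∀ k i j, relTerm A b k i j ≤ τ) :
    cLinMax A b ≤ ENNReal.ofReal (2 * n ^ 2 * τ) := by
  refine iSup_le fun k => ?_
  rw [cLin_eq_skeelCond hdet (hx k)]
  refine ENNReal.ofReal_le_ofReal ?_
  calc skeelCond A b k ≤ 2 * ∑ i, ∑ j, relTerm A b k i j :=
        skeelCond_le_two_mul_sum_relTerm hA hdet b k
    _ ≤ 2 * ∑ _i : Fin n, ∑ _j : Fin n, τ := by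
        gcongr with i _ j _
        exact hτ k i j
    _ = 2 * n ^ 2 * τ := by
        simp only [Finset.sum_const, Finset.card_univ, Fintype.card_fin, nsmul_eq_mul]
        ring

lemma mulVec_update_apply (B : Matrix (Fin n) (Fin n) ℝ) (b : Fin n → ℝ) (i k : Fin n) (t : ℝ) :
    (B *ᵥ Function.update b i t) k = (B *ᵥ Function.update b i 0) k + B k i * t := by
  have hb : Function.update b i t = Function.update b i 0 + Pi.single i t := by
    funext l
    rcases eq_or_ne l i with rfl | hl <;> simp [*]
  rw [hb, Matrix.mulVec_add, Pi.add_apply, Matrix.mulVec_single]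
  simp [mul_comm]

lemma relTerm_add_single (hA : A.IsLowerTriangular) (b : Fin n → ℝ) (k : Fin n) {i j : Fin n}
    (hij : j < i) (h0 : A i j = 0) (t : ℝ) :
    relTerm (A + Matrix.single i j t) b k i j =
      |A⁻¹ k i * (A⁻¹ *ᵥ b) j * t| / |(A⁻¹ *ᵥ b) k - A⁻¹ k i * (A⁻¹ *ᵥ b) j * t| := by
  have hji : A⁻¹ j i = 0 := inv_isLowerTriangular hA hij
  have hinv (l : Fin n) : (A + Matrix.single i j t)⁻¹ l i = A⁻¹ l i := by
    simp [inv_add_single_of_isLowerTriangular hA hij, Matrix.mul_assoc, Matrix.mul_apply,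
      Matrix.single_apply, ite_and, hji]
  have hsol (l : Fin n) : ((A + Matrix.single i j t)⁻¹ *ᵥ b) l
      = (A⁻¹ *ᵥ b) l - A⁻¹ l i * (A⁻¹ *ᵥ b) j * t := by
    rw [inv_add_single_of_isLowerTriangular hA hij, Matrix.sub_mulVec, Pi.sub_apply,
      ← Matrix.mulVec_mulVec, ← Matrix.mulVec_mulVec, Matrix.single_mulVec]
    rw [mulVec_update_apply, Function.update_eq_self_iff.2 (Pi.zero_apply i).symm,
      Matrix.mulVec_zero, Pi.zero_apply]
    ring
  rw [relTerm, if_pos hij, hinv, hsol k, hsol j, hji, Matrix.add_apply, h0,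
    Matrix.single_apply_same]
  congr 2
  ring

lemma relTerm_update (A : Matrix (Fin n) (Fin n) ℝ) (b : Fin n → ℝ) (k : Fin n) {i j : Fin n}
    (hij : i ≤ j) (t : ℝ) :
    relTerm A (Function.update b i t) k i j =
      |-A⁻¹ k i * t| / |(A⁻¹ *ᵥ Function.update b i 0) k - -A⁻¹ k i * t| := by
  rw [relTerm, if_neg hij.not_gt, mulVec_update_apply A⁻¹ b i k t, Function.update_self]
  simp [abs_mul]

end LowerTriangular

section SparseGaussian

variable {n : ℕ}

instance borelSpace_matrix : BorelSpace (Matrix (Fin n) (Fin n) ℝ) :=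
  inferInstanceAs (BorelSpace (Fin n → Fin n → ℝ))

lemma measurable_matrix_apply (i j : Fin n) :
    Measurable fun A : Matrix (Fin n) (Fin n) ℝ => A i j :=
  (continuous_id.matrix_elem i j).measurable

lemma measurable_matrix_inv : Measurable fun A : Matrix (Fin n) (Fin n) ℝ => A⁻¹ := by
  simp only [Matrix.inv_def, Ring.inverse_eq_inv']
  refine measurable_pi_lambda (X := fun _ => Fin n → ℝ) _ fun i =>
    measurable_pi_lambda _ fun j => ?_
  exact continuous_id.matrix_det.measurable.inv.mul
    (continuous_id.matrix_adjugate.matrix_elem i j).measurable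

lemma measurable_matrix_mulVec :
    Measurable fun p : Matrix (Fin n) (Fin n) ℝ × (Fin n → ℝ) => p.1 *ᵥ p.2 := by
  refine measurable_pi_lambda _ fun i => ?_
  simp only [Matrix.mulVec, dotProduct]
  exact Finset.measurable_fun_sum _ fun j _ => ((measurable_matrix_apply i j).comp
    measurable_fst).mul ((measurable_pi_apply j).comp measurable_snd)

lemma measurable_inv_mulVec_apply (k : Fin n) :
    Measurable fun p : Matrix (Fin n) (Fin n) ℝ × (Fin n → ℝ) => (p.1⁻¹ *ᵥ p.2) k :=
  (measurable_pi_apply k).comp (measurable_matrix_mulVec.comp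
    ((measurable_matrix_inv.comp measurable_fst).prodMk measurable_snd))

/-- The matrix with entries `g` on the pattern `S` and `0` elsewhere; `sparseGaussian S` is the
image under this map of a product of Gaussians. -/
def sparseMatrix (S : Finset (Fin n × Fin n)) (g : S → ℝ) : Matrix (Fin n) (Fin n) ℝ :=
  Matrix.of fun i j => if h : (i, j) ∈ S then g ⟨(i, j), h⟩ else 0

variable {S : Finset (Fin n × Fin n)}

lemma sparseMatrix_apply_of_mem (g : S → ℝ) {i j : Fin n} (h : (i, j) ∈ S) :
    sparseMatrix S g i j = g ⟨(i, j), h⟩ :=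
  dif_pos h

lemma sparseMatrix_apply_of_notMem (g : S → ℝ) {i j : Fin n} (h : (i, j) ∉ S) :
    sparseMatrix S g i j = 0 :=
  dif_neg h

lemma sparseMatrix_update (g : S → ℝ) {i j : Fin n} (h : (i, j) ∈ S) (t : ℝ) :
    sparseMatrix S (Function.update g ⟨(i, j), h⟩ t)
      = sparseMatrix S (Function.update g ⟨(i, j), h⟩ 0) + Matrix.single i j t := by
  ext i' j'
  by_cases h' : (i', j') ∈ S
  · rw [Matrix.add_apply, sparseMatrix_apply_of_mem _ h', sparseMatrix_apply_of_mem _ h']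
    by_cases hij : i = i' ∧ j = j'
    · obtain ⟨rfl, rfl⟩ := hij
      simp
    · have hne : (⟨(i', j'), h'⟩ : S) ≠ ⟨(i, j), h⟩ := by
        simpa [Subtype.ext_iff, eq_comm] using hij
      simp [hne, Matrix.single_apply_of_ne _ _ _ _ _ hij]
  · have hij : ¬(i = i' ∧ j = j') := by
      rintro ⟨rfl, rfl⟩
      exact h' h
    simp [sparseMatrix_apply_of_notMem _ h', Matrix.single_apply_of_ne _ _ _ _ _ hij]

lemma measurable_sparseMatrix : Measurable (sparseMatrix S) := by
  refine measurable_pi_lambda (δ := Fin n) (X := fun _ => Fin n → ℝ) _ fun i =>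
    measurable_pi_lambda _ fun j => ?_
  by_cases h : (i, j) ∈ S
  · simpa only [sparseMatrix_apply_of_mem _ h] using measurable_pi_apply _
  · simpa only [sparseMatrix_apply_of_notMem _ h] using measurable_const

variable (Abar : Matrix (Fin n) (Fin n) ℝ) (bbar : Fin n → ℝ) {σ : ℝ}

lemma sparseGaussian_eq_map_sparseMatrix (S : Finset (Fin n × Fin n)) (σ : ℝ) :
    sparseGaussian S Abar σ =
      (Measure.pi fun p : S => gaussianReal (Abar p.1.1 p.1.2) (σ ^ 2).toNNReal).map
        (sparseMatrix S) := by
  rw [Real.toNNReal_of_nonneg (sq_nonneg σ)]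
  rfl

lemma vecGaussian_eq_pi (σ : ℝ) :
    vecGaussian bbar σ = Measure.pi fun i => gaussianReal (bbar i) (σ ^ 2).toNNReal := by
  rw [Real.toNNReal_of_nonneg (sq_nonneg σ)]
  rfl

instance isProbabilityMeasure_sparseGaussian (S : Finset (Fin n × Fin n)) (σ : ℝ) :
    IsProbabilityMeasure (sparseGaussian S Abar σ) := by
  rw [sparseGaussian_eq_map_sparseMatrix]
  exact Measure.isProbabilityMeasure_map measurable_sparseMatrix.aemeasurable

instance isProbabilityMeasure_vecGaussian (σ : ℝ) : IsProbabilityMeasure (vecGaussian bbar σ) := by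
  rw [vecGaussian_eq_pi]
  infer_instance

lemma sparseGaussian_apply_le_of_forall_add_single {s : Set (Matrix (Fin n) (Fin n) ℝ)}
    (hs : MeasurableSet s) {i j : Fin n} (hij : (i, j) ∈ S) {c : ℝ≥0∞}
    (h : ∀ A : Matrix (Fin n) (Fin n) ℝ, (∀ i j, (i, j) ∉ S → A i j = 0) → A i j = 0 →
      gaussianReal (Abar i j) (σ ^ 2).toNNReal {t | A + Matrix.single i j t ∈ s} ≤ c) :
    sparseGaussian S Abar σ s ≤ c := by
  rw [sparseGaussian_eq_map_sparseMatrix, Measure.map_apply measurable_sparseMatrix hs]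
  refine pi_apply_le_of_forall_update _ (measurable_sparseMatrix hs) ⟨(i, j), hij⟩ fun g => ?_
  have hslice : {t | Function.update g ⟨(i, j), hij⟩ t ∈ sparseMatrix S ⁻¹' s} =
      {t | sparseMatrix S (Function.update g ⟨(i, j), hij⟩ 0) + Matrix.single i j t ∈ s} := by
    ext t
    rw [Set.mem_ofPred_eq, Set.mem_preimage, sparseMatrix_update]
    rfl
  rw [hslice]
  refine h _ (fun i j hij => sparseMatrix_apply_of_notMem _ hij) ?_
  rw [sparseMatrix_apply_of_mem _ hij, Function.update_self]

lemma ae_sparseGaussian_apply_eq_zero (σ : ℝ) {i j : Fin n} (hij : (i, j) ∉ S) :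
    ∀ᵐ A ∂sparseGaussian S Abar σ, A i j = 0 := by
  have hs : MeasurableSet {A : Matrix (Fin n) (Fin n) ℝ | A i j = 0} :=
    measurable_matrix_apply i j (measurableSet_singleton 0)
  rw [sparseGaussian_eq_map_sparseMatrix, ae_map_iff measurable_sparseMatrix.aemeasurable hs]
  exact .of_forall fun g => sparseMatrix_apply_of_notMem g hij

lemma ae_sparseGaussian_apply_ne_zero (hσ : 0 < σ) {i j : Fin n} (hij : (i, j) ∈ S) :
    ∀ᵐ A ∂sparseGaussian S Abar σ, A i j ≠ 0 := by
  have := nullSingletonClass_gaussianReal (μ := Abar i j) (Real.toNNReal_pos.2 (pow_pos hσ 2)).ne'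
  have hs : MeasurableSet {A : Matrix (Fin n) (Fin n) ℝ | A i j = 0} :=
    measurable_matrix_apply i j (measurableSet_singleton 0)
  simp only [ae_iff, not_not, ← nonpos_iff_eq_zero]
  refine sparseGaussian_apply_le_of_forall_add_single Abar hs hij fun A _ hA => ?_
  simp [hA]

lemma ae_vecGaussian_mulVec_apply_ne_zero (hσ : 0 < σ) {B : Matrix (Fin n) (Fin n) ℝ}
    {k i : Fin n} (hB : B k i ≠ 0) : ∀ᵐ b ∂vecGaussian bbar σ, (B *ᵥ b) k ≠ 0 := by
  have := nullSingletonClass_gaussianReal (μ := bbar i) (Real.toNNReal_pos.2 (pow_pos hσ 2)).ne'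
  have hmul : Measurable fun b : Fin n → ℝ => (B *ᵥ b) k :=
    (measurable_pi_apply k).comp (measurable_matrix_mulVec.comp measurable_prodMk_left)
  simp only [vecGaussian_eq_pi, ae_iff, not_not, ← nonpos_iff_eq_zero]
  refine pi_apply_le_of_forall_update _ (hmul (measurableSet_singleton 0)) i fun b => ?_
  have hsub : {t : ℝ | (B *ᵥ Function.update b i t) k = 0}
      ⊆ {-(B *ᵥ Function.update b i 0) k / B k i} := fun t (ht : (B *ᵥ _) k = 0) => by
    rw [mulVec_update_apply] at ht
    rw [Set.mem_singleton_iff, eq_div_iff hB]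
    linarith
  exact (measure_mono hsub).trans (measure_singleton _).le

end SparseGaussian

section TriangularSystem

variable {n : ℕ} (Lbar : Matrix (Fin n) (Fin n) ℝ) (bbar : Fin n → ℝ) {σ : ℝ}

/-- The joint law of the random lower triangular system `(L, b)`, with `L ~ N_T(L̄, σ²Id)` and
`b ~ N(b̄, σ²Id)` independent. -/
noncomputable abbrev triSystemLaw (σ : ℝ) : Measure (Matrix (Fin n) (Fin n) ℝ × (Fin n → ℝ)) :=
  (sparseGaussian (triPattern n) Lbar σ).prod (vecGaussian bbar σ)

lemma mem_triPattern {i j : Fin n} : (i, j) ∈ triPattern n ↔ j ≤ i := by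
  simp [triPattern]

lemma ae_sparseGaussian_isLowerTriangular (σ : ℝ) :
    ∀ᵐ A ∂sparseGaussian (triPattern n) Lbar σ, A.IsLowerTriangular := by
  have hzero : ∀ᵐ A ∂sparseGaussian (triPattern n) Lbar σ, ∀ i j, i < j → A i j = 0 := by
    simp only [ae_all_iff]
    exact fun i j hij => ae_sparseGaussian_apply_eq_zero Lbar σ (mem_triPattern.not.2 hij.not_ge)
  filter_upwards [hzero] with A hA i j hij using hA i j hij

lemma ae_sparseGaussian_isUnit_det (hσ : 0 < σ) :
    ∀ᵐ A ∂sparseGaussian (triPattern n) Lbar σ, IsUnit A.det := by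
  have hdiag : ∀ᵐ A ∂sparseGaussian (triPattern n) Lbar σ, ∀ i, A i i ≠ 0 :=
    ae_all_iff.2 fun i => ae_sparseGaussian_apply_ne_zero Lbar hσ (mem_triPattern.2 le_rfl)
  filter_upwards [ae_sparseGaussian_isLowerTriangular Lbar σ, hdiag] with A hA hA0
  rw [isUnit_iff_ne_zero, Matrix.det_of_isLowerTriangular _ hA]
  exact Finset.prod_ne_zero_iff.2 fun i _ => hA0 i

lemma ae_vecGaussian_inv_mulVec_apply_ne_zero (hσ : 0 < σ) {A : Matrix (Fin n) (Fin n) ℝ}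
    (hA : IsUnit A.det) (k : Fin n) : ∀ᵐ b ∂vecGaussian bbar σ, (A⁻¹ *ᵥ b) k ≠ 0 := by
  obtain ⟨i, hi⟩ : ∃ i, A⁻¹ k i ≠ 0 := by
    by_contra! hrow
    exact (Matrix.isUnit_nonsing_inv_det A hA).ne_zero (Matrix.det_eq_zero_of_row_eq_zero k hrow)
  exact ae_vecGaussian_mulVec_apply_ne_zero bbar hσ hi

lemma ae_triSystemLaw_nondegenerate (hσ : 0 < σ) :
    ∀ᵐ p ∂triSystemLaw Lbar bbar σ,
      p.1.IsLowerTriangular ∧ IsUnit p.1.det ∧ ∀ k, (p.1⁻¹ *ᵥ p.2) k ≠ 0 := by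
  have hsol (k : Fin n) : ∀ᵐ p ∂triSystemLaw Lbar bbar σ, (p.1⁻¹ *ᵥ p.2) k ≠ 0 := by
    have hs : MeasurableSet {p : Matrix (Fin n) (Fin n) ℝ × (Fin n → ℝ) | (p.1⁻¹ *ᵥ p.2) k ≠ 0} :=
      measurable_inv_mulVec_apply k (measurableSet_singleton 0).compl
    rw [Measure.ae_prod_iff_ae_ae hs]
    filter_upwards [ae_sparseGaussian_isUnit_det Lbar hσ] with A hA
      using ae_vecGaussian_inv_mulVec_apply_ne_zero bbar hσ hA k
  filter_upwards [
    Measure.quasiMeasurePreserving_fst.ae (ae_sparseGaussian_isLowerTriangular Lbar σ),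
    Measure.quasiMeasurePreserving_fst.ae (ae_sparseGaussian_isUnit_det Lbar hσ),
    ae_all_iff.2 hsol] with p hL hdet hx using ⟨hL, hdet, hx⟩

lemma measurable_inv_apply (k i : Fin n) :
    Measurable fun p : Matrix (Fin n) (Fin n) ℝ × (Fin n → ℝ) => p.1⁻¹ k i :=
  (measurable_matrix_apply k i).comp (measurable_matrix_inv.comp measurable_fst)

lemma measurable_relTerm (k i j : Fin n) :
    Measurable fun p : Matrix (Fin n) (Fin n) ℝ × (Fin n → ℝ) => relTerm p.1 p.2 k i j := by
  have hentry : Measurable fun p : Matrix (Fin n) (Fin n) ℝ × (Fin n → ℝ) => p.1 i j :=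
    (measurable_matrix_apply i j).comp measurable_fst
  have hrhs : Measurable fun p : Matrix (Fin n) (Fin n) ℝ × (Fin n → ℝ) => p.2 i :=
    (measurable_pi_apply i).comp measurable_snd
  unfold relTerm
  refine ((measurable_inv_apply k i).mul ?_).abs.div (measurable_inv_mulVec_apply k).abs
  split_ifs
  · exact hentry.mul (measurable_inv_mulVec_apply j)
  · exact hrhs

lemma measurable_skeelCond (k : Fin n) :
    Measurable fun p : Matrix (Fin n) (Fin n) ℝ × (Fin n → ℝ) => skeelCond p.1 p.2 k := by
  have hentry (i j : Fin n) :
      Measurable fun p : Matrix (Fin n) (Fin n) ℝ × (Fin n → ℝ) => p.1 i j :=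
    (measurable_matrix_apply i j).comp measurable_fst
  have hrhs (i : Fin n) : Measurable fun p : Matrix (Fin n) (Fin n) ℝ × (Fin n → ℝ) => p.2 i :=
    (measurable_pi_apply i).comp measurable_snd
  unfold skeelCond
  refine (Finset.measurable_fun_sum _ fun i _ => (measurable_inv_apply k i).abs.mul ?_).div
    (measurable_inv_mulVec_apply k).abs
  exact (Finset.measurable_fun_sum _ fun j _ => (hentry i j).abs.mul
    (measurable_inv_mulVec_apply j).abs).add (hrhs i).abs

lemma aemeasurable_cLinMax (hσ : 0 < σ) :
    AEMeasurable (fun p => cLinMax p.1 p.2) (triSystemLaw Lbar bbar σ) := by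
  refine (Measurable.iSup fun k => (measurable_skeelCond k).ennreal_ofReal).aemeasurable.congr ?_
  filter_upwards [ae_triSystemLaw_nondegenerate Lbar bbar hσ] with p ⟨_, hdet, hx⟩
  exact iSup_congr fun k => (cLin_eq_skeelCond hdet (hx k)).symm

lemma ae_one_le_cLinMax [NeZero n] (hσ : 0 < σ) :
    ∀ᵐ p ∂triSystemLaw Lbar bbar σ, 1 ≤ cLinMax p.1 p.2 := by
  filter_upwards [ae_triSystemLaw_nondegenerate Lbar bbar hσ] with p ⟨_, hdet, hx⟩
  refine le_iSup_of_le 0 ?_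
  rw [cLin_eq_skeelCond hdet (hx 0), ENNReal.one_le_ofReal]
  exact one_le_skeelCond (hx 0)

variable {r : ℝ}

lemma gaussianReal_sq_setOf_le_abs_mul_div_abs_sub_mul_le (hσ : 0 < σ) {m : ℝ} (hm : |m| ≤ r)
    {t : ℝ} (ht : 0 < t) (α γ : ℝ) :
    gaussianReal m (σ ^ 2).toNNReal {x | t ≤ |γ * x| / |α - γ * x|}
      ≤ ENNReal.ofReal (2 * ((r + σ) / σ) / t) := by
  have hv : (σ ^ 2).toNNReal ≠ 0 := (Real.toNNReal_pos.2 (pow_pos hσ 2)).ne'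
  have hsqrt : √((σ ^ 2).toNNReal : ℝ) = σ := by
    rw [Real.coe_toNNReal _ (sq_nonneg σ), Real.sqrt_sq hσ.le]
  refine (gaussianReal_setOf_le_abs_mul_div_abs_sub_mul_le m hv ht α γ).trans ?_
  rw [hsqrt]
  gcongr

variable {Lbar bbar}

lemma triSystemLaw_setOf_le_relTerm_le (hσ : 0 < σ) (hL : ∀ i j, j < i → |Lbar i j| ≤ r)
    (hb : ∀ i, |bbar i| ≤ r) {t : ℝ} (ht : 0 < t) (k i j : Fin n) :
    triSystemLaw Lbar bbar σ {p | t ≤ relTerm p.1 p.2 k i j}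
      ≤ ENNReal.ofReal (2 * ((r + σ) / σ) / t) := by
  have hs : MeasurableSet {p : Matrix (Fin n) (Fin n) ℝ × (Fin n → ℝ) |
      t ≤ relTerm p.1 p.2 k i j} := measurableSet_le measurable_const (measurable_relTerm k i j)
  rcases lt_or_ge j i with hji | hij
  · refine prod_apply_le_of_forall_right _ _ hs fun b =>
      sparseGaussian_apply_le_of_forall_add_single Lbar (measurable_prodMk_right hs)
        (mem_triPattern.2 hji.le) fun A hA hA0 => ?_
    have hAtri : A.IsLowerTriangular := fun i j hij =>
      hA i j (mem_triPattern.not.2 (not_le.2 hij))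
    simp only [Set.mem_preimage, Set.mem_ofPred_eq, relTerm_add_single hAtri b k hji hA0]
    exact gaussianReal_sq_setOf_le_abs_mul_div_abs_sub_mul_le hσ (hL i j hji) ht _ _
  · refine prod_apply_le_of_forall_left _ _ hs fun A => ?_
    rw [vecGaussian_eq_pi]
    refine pi_apply_le_of_forall_update _ (measurable_prodMk_left hs) i fun b => ?_
    simp only [Set.mem_preimage, Set.mem_ofPred_eq, relTerm_update A b k hij]
    exact gaussianReal_sq_setOf_le_abs_mul_div_abs_sub_mul_le hσ (hb i) ht _ _

lemma triSystemLaw_setOf_lt_cLinMax_le_mul (hσ : 0 < σ) (hL : ∀ i j, j < i → |Lbar i j| ≤ r)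
    (hb : ∀ i, |bbar i| ≤ r) {τ : ℝ} (hτ : 0 < τ) :
    triSystemLaw Lbar bbar σ {p | ENNReal.ofReal (2 * n ^ 2 * τ) < cLinMax p.1 p.2}
      ≤ n ^ 3 * ENNReal.ofReal (2 * ((r + σ) / σ) / τ) := by
  have hcover : ∀ᵐ p ∂triSystemLaw Lbar bbar σ,
      ENNReal.ofReal (2 * n ^ 2 * τ) < cLinMax p.1 p.2 →
        p ∈ ⋃ q : Fin n × Fin n × Fin n, {p | τ ≤ relTerm p.1 p.2 q.1 q.2.1 q.2.2} := by
    filter_upwards [ae_triSystemLaw_nondegenerate Lbar bbar hσ] with p ⟨htri, hdet, hx⟩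
    contrapose!
    intro hp
    simp only [Set.mem_iUnion, Set.mem_ofPred_eq, not_exists, not_le] at hp
    exact cLinMax_le_of_forall_relTerm_le htri hdet hx fun k i j => (hp (k, i, j)).le
  calc triSystemLaw Lbar bbar σ {p | ENNReal.ofReal (2 * n ^ 2 * τ) < cLinMax p.1 p.2}
      ≤ triSystemLaw Lbar bbar σ
          (⋃ q : Fin n × Fin n × Fin n, {p | τ ≤ relTerm p.1 p.2 q.1 q.2.1 q.2.2}) :=
        measure_mono_ae hcover
    _ ≤ ∑ q : Fin n × Fin n × Fin n,
          triSystemLaw Lbar bbar σ {p | τ ≤ relTerm p.1 p.2 q.1 q.2.1 q.2.2} :=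
        measure_iUnion_fintype_le _ _
    _ ≤ ∑ _q : Fin n × Fin n × Fin n, ENNReal.ofReal (2 * ((r + σ) / σ) / τ) :=
        Finset.sum_le_sum fun q _ => triSystemLaw_setOf_le_relTerm_le hσ hL hb hτ _ _ _
    _ = n ^ 3 * ENNReal.ofReal (2 * ((r + σ) / σ) / τ) := by
        simp only [Finset.sum_const, Finset.card_univ, Fintype.card_prod, Fintype.card_fin,
          nsmul_eq_mul, Nat.cast_mul]
        ring

lemma triSystemLaw_setOf_lt_cLinMax_le [NeZero n] (hσ : 0 < σ)
    (hL : ∀ i j, j < i → |Lbar i j| ≤ r) (hb : ∀ i, |bbar i| ≤ r) {t : ℝ} (ht : 0 < t) :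
    triSystemLaw Lbar bbar σ {p | ENNReal.ofReal t < cLinMax p.1 p.2}
      ≤ ENNReal.ofReal (4 * n ^ 5 * ((r + σ) / σ) / t) := by
  have hn : (0 : ℝ) < n := Nat.cast_pos.2 (NeZero.pos n)
  have hscale : 2 * n ^ 2 * (t / (2 * n ^ 2)) = t := mul_div_cancel₀ t (by positivity)
  have hbound := triSystemLaw_setOf_lt_cLinMax_le_mul hσ hL hb
    (τ := t / (2 * n ^ 2)) (by positivity)
  rw [hscale] at hbound
  refine hbound.trans_eq ?_
  rw [← ENNReal.ofReal_natCast, ← ENNReal.ofReal_pow hn.le, ← ENNReal.ofReal_mul (by positivity)]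
  congr 1
  field_simp
  ring

theorem integrable_log_cLinMax_and_integral_le [NeZero n] (hσ : 0 < σ)
    (hL : ∀ i j, j < i → |Lbar i j| ≤ r) (hb : ∀ i, |bbar i| ≤ r) :
    Integrable (fun p => Real.log (cLinMax p.1 p.2).toReal) (triSystemLaw Lbar bbar σ) ∧
      ∫ p, Real.log (cLinMax p.1 p.2).toReal ∂triSystemLaw Lbar bbar σ
        ≤ Real.log (4 * n ^ 5 * ((r + σ) / σ)) + 1 := by
  have hn : (1 : ℝ) ≤ n := Nat.one_le_cast.2 NeZero.one_le
  have hr : 0 ≤ r := (abs_nonneg _).trans (hb 0)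
  have hratio : 1 ≤ (r + σ) / σ := (one_le_div hσ).2 (le_add_of_nonneg_left hr)
  refine integrable_log_and_integral_log_le_of_tail (aemeasurable_cLinMax Lbar bbar hσ)
    (ae_one_le_cLinMax Lbar bbar hσ) ?_ fun t ht => triSystemLaw_setOf_lt_cLinMax_le hσ hL hb ht
  exact one_le_mul_of_one_le_of_one_le (by linarith [one_le_pow₀ hn (n := 5)]) hratio

end TriangularSystem

lemma log_four_mul_pow_five_mul_add_one_le {x y : ℝ} (hx : 0 < x) (hy : 0 < y) :
    Real.log (4 * x ^ 5 * y) + 1 ≤ Real.log y + 5 * Real.log x + 2.65 := by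
  have hlog_four : Real.log 4 = 2 * Real.log 2 := by
    rw [show (4 : ℝ) = 2 ^ 2 by norm_num, Real.log_pow, Nat.cast_ofNat]
  rw [Real.log_mul (by positivity) hy.ne', Real.log_mul four_ne_zero (by positivity),
    Real.log_pow, hlog_four]
  push_cast
  linarith [Real.log_two_lt_d9]

theorem expectation_log_cLinMax_triangular_le_general {n : ℕ} {Lbar : Matrix (Fin n) (Fin n) ℝ}
    {bbar : Fin n → ℝ} {r σ β : ℝ} (hr : 0 ≤ r) (hL : ∀ i j, j < i → |Lbar i j| ≤ r)
    (hb : ∀ i, |bbar i| ≤ r) (hσ : 0 < σ) (hβ : 1 < β) :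
    Integrable (fun p => Real.log (cLinMax p.1 p.2).toReal / Real.log β)
        (triSystemLaw Lbar bbar σ) ∧
      ∫ p, Real.log (cLinMax p.1 p.2).toReal / Real.log β ∂triSystemLaw Lbar bbar σ
        ≤ Real.log ((r + σ) / σ) / Real.log β + 5 * (Real.log n / Real.log β)
          + 2.65 / Real.log β := by
  have hlogβ : 0 < Real.log β := Real.log_pos hβ
  rcases Nat.eq_zero_or_pos n with rfl | hn
  · -- `cLinMax` is an empty supremum, so both sides contain `Real.log 0 = 0`.
    have hlogratio : 0 ≤ Real.log ((r + σ) / σ) :=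
      Real.log_nonneg ((one_le_div hσ).2 (le_add_of_nonneg_left hr))
    refine ⟨.of_finite, ?_⟩
    simp only [cLinMax, iSup_of_empty, bot_eq_zero, ENNReal.toReal_zero, Real.log_zero, zero_div,
      integral_zero, CharP.cast_eq_zero, mul_zero]
    positivity
  · have : NeZero n := ⟨hn.ne'⟩
    obtain ⟨hint, hle⟩ := integrable_log_cLinMax_and_integral_le hσ hL hb
    refine ⟨hint.div_const _, ?_⟩
    rw [integral_div, mul_div_assoc', ← add_div, ← add_div]
    gcongr
    exact hle.trans (log_four_mul_pow_five_mul_add_one_le (Nat.cast_pos.2 hn) (by positivity))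

/-- Let `L̄` be lower triangular with `‖L̄‖_max ≤ 1`, `b̄ ∈ ℝⁿ` with
`‖b̄‖_∞ ≤ 1`, `σ > 0`, and let `L ~ N_T(L̄, σ²Id)` and `b ~ N(b̄, σ²Id)` be independent.
Then for every `β > 1`,
`E(log_β(c(L,b))) ≤ log_β((1+σ)/σ) + 5·log_β n + 2.65/ln β`,
where `c(L,b) = max_k c_k(L,b)`. -/
theorem expectation_log_cLinMax_triangular_le {n : ℕ}
    (Lbar : Matrix (Fin n) (Fin n) ℝ) (htri : ∀ i j : Fin n, i < j → Lbar i j = 0)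
    (hmax : ∀ i j, |Lbar i j| ≤ 1) (bbar : Fin n → ℝ) (hbmax : ∀ i, |bbar i| ≤ 1)
    (σ : ℝ) (hσ : 0 < σ) (β : ℝ) (hβ : 1 < β) :
    ∫ p, Real.log (cLinMax p.1 p.2).toReal / Real.log β
        ∂((sparseGaussian (triPattern n) Lbar σ).prod (vecGaussian bbar σ))
      ≤ Real.log ((1 + σ) / σ) / Real.log β + 5 * (Real.log n / Real.log β)
          + 2.65 / Real.log β :=
  (expectation_log_cLinMax_triangular_le_general zero_le_one (fun i j _ => hmax i j) hbmax hσ hβ).2
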